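/- For α ≥ 1/2, λ ≥ 0 and every n ≥ 1, all zeros of the monic Gegenbauer–Sobolev polynomial Q_{n,λ}^{(α)} are contained in the interval [-1, 1]. -/

import Mathlib

open Polynomial MeasureTheory Real Set

/-- The Gegenbauer inner product `∫ f g (1-x²)^{α-1/2}` on `(-1,1)`. -/
noncomputable def gegInner (α : ℝ) (f g : Polynomial ℝ) : ℝ :=
  ∫ x in Set.Ioo (-1 : ℝ) 1, f.eval x * g.eval x * (1 - x ^ 2) ^ (α - 1/2)

/-- `C` is the monic Gegenbauer polynomial of degree `n` for parameter `α`. -/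
def IsMonicGegenbauer (α : ℝ) (n : ℕ) (C : Polynomial ℝ) : Prop :=
  C.Monic ∧ C.natDegree = n ∧
    ∀ p : Polynomial ℝ, p.degree < (n : ℕ) → gegInner α C p = 0

/-- The Gegenbauer–Sobolev inner product. -/
noncomputable def sobInner (α lam : ℝ) (f g : Polynomial ℝ) : ℝ :=
  gegInner α f g + lam * gegInner α (derivative f) (derivative g)

/-- `Q` is the monic Gegenbauer–Sobolev polynomial of degree `n`. -/
def IsMonicGegSobolev (α lam : ℝ) (n : ℕ) (Q : Polynomial ℝ) : Prop :=
  Q.Monic ∧ Q.natDegree = n ∧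
    ∀ p : Polynomial ℝ, p.degree < (n : ℕ) → sobInner α lam Q p = 0

/-!
By orthogonality `Q` has the parity of `n`, so `Q = x ^ e * q (x ^ 2)` with `e ≤ 1`, and the zeros
of `q` have to be located in `[0, 1]`. In the variable `t = x ^ 2` the Gegenbauer weight becomes a
functional `J` on `[0, 1]`, and an integration by parts turns the Sobolev product of `q` and `g`
into `J (q * g) + lam * (K (q * E g) - J (q * S g))`, where `E` and `S` are the differential
operators induced by `x * d/dx` and `d²/dx²`, and `K` is the positive functional obtained by
lowering the exponent of the weight by one, normalized so that `(1 - t) * K = (2 * α - 1) * J`.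

The cone spanned by the polynomials `t ^ i * (t - 1) ^ (N - i)`, `i ≤ N`, is mapped by `E` to
itself and by `S` to the one for `N - 1`. By induction on the degree of `q` it follows that
`K q ≥ 0` and that `J (q * g) ≤ 0` for every `g` in such a cone with `N < deg q`; the degree is
lowered by subtracting from `q` a combination of two consecutive `J`-orthogonal polynomials on
which `K` vanishes. Products of factors `t - u` with `u ∈ [0, 1]` lie in these cones, so the usual
sign-change argument puts all zeros of `q` but at most one into `(0, 1)`, and shows that a
remaining zero must be `1`.
-/

open scoped NNReal

theorem degree_lt_of_natDegree_lt {R : Type*} [Semiring R] {p : R[X]} {n : ℕ}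
    (hp : p.natDegree < n) : p.degree < n :=
  degree_le_natDegree.trans_lt (WithBot.coe_lt_coe.2 hp)

section OrthogonalPolynomials

variable {R : Type*} [CommRing R]

/-- `P` is a monic polynomial of degree `n` which the bilinear form `B` makes orthogonal to every
polynomial of smaller degree; `B` is not assumed symmetric, and `P` is its left argument. -/
def IsMonicOrthogonal (B : LinearMap.BilinForm R R[X]) (n : ℕ) (P : R[X]) : Prop :=
  P.IsMonicOfDegree n ∧ ∀ p : R[X], p.degree < n → B P p = 0

variable {B : LinearMap.BilinForm R R[X]} {n : ℕ} {P : R[X]}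

theorem apply_self_eq_coeff_mul_apply_X_pow (hP : P.natDegree ≤ n)
    (horth : ∀ p : R[X], p.degree < n → B P p = 0) : B P P = P.coeff n * B P (X ^ n) := by
  have hlt : degree (P - P.coeff n • X ^ n) < n := by
    refine (degree_lt_iff_coeff_zero _ _).2 fun k hk ↦ ?_
    rcases hk.eq_or_lt with rfl | hk
    · simp
    · simp [coeff_X_pow, hk.ne', coeff_eq_zero_of_natDegree_lt (hP.trans_lt hk)]
  have hzero := horth _ hlt
  rwa [map_sub, sub_eq_zero, map_smul, smul_eq_mul] at hzero

theorem IsMonicOrthogonal.comp_neg_X (hP : IsMonicOrthogonal B n P) (hB : ∀ f ≠ 0, B f f ≠ 0)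
    (hrefl : ∀ f g, B (f.comp (-X)) g = B f (g.comp (-X))) :
    (-1) ^ n * P.comp (-X) = P := by
  nontriviality R
  obtain ⟨⟨rfl, hmonic⟩, horth⟩ := hP
  have hsign (f : R[X]) (k : ℕ) : ((-1) ^ k * f).degree = f.degree := by
    rcases neg_one_pow_eq_or R[X] k with h | h <;> simp [h]
  set D : R[X] := P - (-1) ^ P.natDegree * P.comp (-X) with hD
  have hlt : D.degree < P.natDegree := by
    rw [← degree_eq_natDegree hmonic.ne_zero]
    exact degree_sub_lt_left (by rw [hsign, degree_comp_neg_X]) hmonic.ne_zero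
      (hmonic.leadingCoeff.trans
        hmonic.neg_one_pow_natDegree_mul_comp_neg_X.leadingCoeff.symm)
  have hDrefl : B (P.comp (-X)) D = 0 := by
    rw [hrefl]
    exact horth _ (by rwa [degree_comp_neg_X])
  have hDD : B D D = 0 := by
    rcases neg_one_pow_eq_or R[X] P.natDegree with h | h <;> nth_rw 1 [hD] <;>
      simp only [h, one_mul, neg_one_mul, sub_neg_eq_add, map_sub, map_add, LinearMap.sub_apply,
        LinearMap.add_apply, horth D hlt, hDrefl, sub_zero, add_zero]
  exact (sub_eq_zero.1 (by_contra fun h ↦ hB D h hDD)).symm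

theorem IsMonicOrthogonal.apply_X_pow (hP : IsMonicOrthogonal B n P) : B P (X ^ n) = B P P := by
  obtain ⟨⟨rfl, hmonic⟩, horth⟩ := hP
  rw [apply_self_eq_coeff_mul_apply_X_pow le_rfl horth, hmonic.coeff_natDegree, one_mul]

theorem exists_isMonicOrthogonal {F : Type*} [Field F] {B : LinearMap.BilinForm F F[X]}
    (hB : ∀ f ≠ 0, B f f ≠ 0) (n : ℕ) :
    ∃ P, IsMonicOrthogonal B n P := by
  let T : F[X]_n →ₗ[F] Module.Dual F F[X]_n := B.restrict _
  have hinj : Function.Injective T := by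
    refine (injective_iff_map_eq_zero T).2 fun p hp ↦ ?_
    by_contra hp0
    exact hB p (by simpa only [ne_eq, ZeroMemClass.coe_eq_zero] using hp0)
      (LinearMap.congr_fun hp p)
  have hsurj : Function.Surjective T :=
    (LinearMap.injective_iff_surjective_of_finrank_eq_finrank Subspace.dual_finrank_eq.symm).1 hinj
  obtain ⟨⟨p, hp⟩, hTp⟩ := hsurj (-(B (X ^ n)).domRestrict _)
  have hlt : p.degree < n := mem_degreeLT.1 hp
  have hdeg : (X ^ n + p).natDegree = n := by
    rw [natDegree_add_eq_left_of_degree_lt (by rwa [degree_X_pow]), natDegree_X_pow]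
  refine ⟨X ^ n + p, ⟨hdeg, monic_X_pow_add hlt⟩, fun f hf ↦ ?_⟩
  have hpf : B p f = -B (X ^ n) f := LinearMap.congr_fun hTp ⟨f, mem_degreeLT.2 hf⟩
  rw [map_add, LinearMap.add_apply, hpf, add_neg_cancel]

end OrthogonalPolynomials

theorem exists_eq_prod_X_sub_C_mul {R : Type*} [CommRing R] [IsDomain R] (s : Set R) {q : R[X]}
    (hq : q ≠ 0) :
    ∃ (m : Multiset R) (ρ : R[X]), q = (m.map fun t ↦ X - C t).prod * ρ ∧
      (∀ t ∈ m, t ∈ s) ∧ ∀ t ∈ s, ρ.eval t ≠ 0 := by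
  classical
  let m := q.roots.filter (· ∈ s)
  obtain ⟨ρ, hρ⟩ := (Multiset.prod_X_sub_C_dvd_iff_le_roots hq m).2 (Multiset.filter_le _ _)
  have hm : ∀ t ∈ m, t ∈ s := fun t ht ↦ (Multiset.mem_filter.1 ht).2
  refine ⟨m, ρ, hρ, hm, fun t ht hroot ↦ ?_⟩
  have hroots : q.roots = m + ρ.roots := by
    rw [hρ, roots_mul (hρ ▸ hq), roots_multiset_prod_X_sub_C]
  have hfilter : m = m + ρ.roots.filter (· ∈ s) := by
    nth_rw 2 [← Multiset.filter_eq_self.2 hm]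
    rw [← Multiset.filter_add, ← hroots]
  have htρ : t ∈ ρ.roots.filter (· ∈ s) :=
    Multiset.mem_filter.2 ⟨(mem_roots (right_ne_zero_of_mul (hρ ▸ hq))).2 hroot, ht⟩
  rw [left_eq_add.1 hfilter] at htρ
  exact Multiset.notMem_zero t htρ

theorem eval_nonneg_or_nonpos_of_ne_zero {a b : ℝ} (hab : a < b) {p : ℝ[X]}
    (hp : ∀ t ∈ Ioo a b, p.eval t ≠ 0) :
    (∀ t ∈ Icc a b, 0 ≤ p.eval t) ∨ ∀ t ∈ Icc a b, p.eval t ≤ 0 := by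
  have hsign : (∀ t ∈ Ioo a b, 0 ≤ p.eval t) ∨ ∀ t ∈ Ioo a b, p.eval t ≤ 0 := by
    by_contra! ⟨⟨x, hx, hpx⟩, y, hy, hpy⟩
    obtain ⟨t, ht, hpt⟩ := isPreconnected_Ioo.intermediate_value hx hy
      p.continuous.continuousOn ⟨hpx.le, hpy.le⟩
    exact hp t ht hpt
  rw [← closure_Ioo hab.ne]
  exact hsign.imp
    (fun h ↦ closure_minimal h (isClosed_Ici.preimage p.continuous))
    (fun h ↦ closure_minimal h (isClosed_Iic.preimage p.continuous))

theorem isMonicOfDegree_prod_X_sub_C {R : Type*} [CommRing R] [Nontrivial R] (s : Multiset R) :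
    IsMonicOfDegree (s.map fun t ↦ X - C t).prod s.card :=
  ⟨natDegree_multiset_prod_X_sub_C_eq_card s, monic_multisetProd_X_sub_C s⟩

theorem eval_prod_X_sub_C_pos {x : ℝ} {s : Multiset ℝ} (hs : ∀ t ∈ s, t < x) :
    0 < (s.map fun t ↦ X - C t).prod.eval x := by
  rw [eval_multiset_prod, Multiset.map_map]
  refine Multiset.prod_pos fun y hy ↦ ?_
  obtain ⟨t, ht, rfl⟩ := Multiset.mem_map.1 hy
  simpa only [Function.comp_apply, eval_sub, eval_X, eval_C, sub_pos] using hs t ht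

theorem exists_eq_prod_X_sub_C_mul_of_sign {a b : ℝ} (hab : a < b) {q : ℝ[X]}
    {m : ℕ} (hq : q.IsMonicOfDegree m) :
    ∃ (s : Multiset ℝ) (ρ : ℝ[X]) (k : ℕ), q = (s.map fun t ↦ X - C t).prod * ρ ∧
      (∀ t ∈ s, t ∈ Ioo a b) ∧ ρ.IsMonicOfDegree k ∧ s.card + k = m ∧
      ((∀ t ∈ Icc a b, 0 ≤ ρ.eval t) ∨ ∀ t ∈ Icc a b, ρ.eval t ≤ 0) := by
  obtain ⟨s, ρ, rfl, hs, hρ⟩ := exists_eq_prod_X_sub_C_mul (Ioo a b) hq.ne_zero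
  have hP := isMonicOfDegree_prod_X_sub_C s
  have hρmonic := hP.monic.of_mul_monic_left hq.monic
  refine ⟨s, ρ, ρ.natDegree, rfl, hs, ⟨rfl, hρmonic⟩, ?_, eval_nonneg_or_nonpos_of_ne_zero hab hρ⟩
  rw [← hq.natDegree_eq, hP.monic.natDegree_mul hρmonic, hP.natDegree_eq]

section SignedBernsteinCone

/-- The cone spanned by the polynomials `X ^ i * (X - 1) ^ (N - i)` with `i ≤ N`. These are the
Bernstein polynomials of degree `N` on `[0, 1]`, up to positive factors and signs which make the
leading coefficients positive. -/
noncomputable def signedBernsteinCone : ℕ → PointedCone ℝ ℝ[X]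
  | 0 => PointedCone.hull ℝ {1}
  | N + 1 => (signedBernsteinCone N).map (LinearMap.mulLeft ℝ X) ⊔
      (signedBernsteinCone N).map (LinearMap.mulLeft ℝ (X - 1))

namespace signedBernsteinCone

variable {N : ℕ} {g : ℝ[X]}

theorem mem_zero_iff : g ∈ signedBernsteinCone 0 ↔ ∃ c, 0 ≤ c ∧ g = C c := by
  rw [signedBernsteinCone, PointedCone.hull, Submodule.mem_span_singleton]
  constructor
  · rintro ⟨⟨c, hc⟩, rfl⟩
    exact ⟨c, hc, by rw [C_eq_algebraMap, Algebra.algebraMap_eq_smul_one]; rfl⟩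
  · rintro ⟨c, hc, rfl⟩
    exact ⟨⟨c, hc⟩, by rw [C_eq_algebraMap, Algebra.algebraMap_eq_smul_one]; rfl⟩

theorem mem_succ_iff : g ∈ signedBernsteinCone (N + 1) ↔
    ∃ u ∈ signedBernsteinCone N, ∃ v ∈ signedBernsteinCone N, X * u + (X - 1) * v = g := by
  simp only [signedBernsteinCone, Submodule.mem_sup, PointedCone.mem_map, exists_exists_and_eq_and,
    LinearMap.mulLeft_apply]

theorem X_mul_mem (hg : g ∈ signedBernsteinCone N) : X * g ∈ signedBernsteinCone (N + 1) :=
  mem_succ_iff.2 ⟨g, hg, 0, zero_mem _, by ring⟩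

theorem X_sub_one_mul_mem (hg : g ∈ signedBernsteinCone N) :
    (X - 1) * g ∈ signedBernsteinCone (N + 1) :=
  mem_succ_iff.2 ⟨0, zero_mem _, g, hg, by ring⟩

theorem X_sub_C_mul_mem {t : ℝ} (ht : t ∈ Icc 0 1) (hg : g ∈ signedBernsteinCone N) :
    (X - C t) * g ∈ signedBernsteinCone (N + 1) := by
  have hconv : (X - C t) * g = X * ((1 - t) • g) + (X - 1) * (t • g) := by
    simp only [smul_eq_C_mul, C_sub, C_1]
    ring
  rw [hconv]
  exact add_mem (X_mul_mem (PointedCone.smul_mem _ (sub_nonneg.2 ht.2) hg))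
    (X_sub_one_mul_mem (PointedCone.smul_mem _ ht.1 hg))

theorem prod_X_sub_C_mem {s : Multiset ℝ} (hs : ∀ t ∈ s, t ∈ Icc (0 : ℝ) 1) :
    (s.map fun t ↦ X - C t).prod ∈ signedBernsteinCone s.card := by
  induction s using Multiset.induction with
  | empty => exact mem_zero_iff.2 ⟨1, zero_le_one, by simp⟩
  | cons t s ih =>
    rw [Multiset.map_cons, Multiset.prod_cons, Multiset.card_cons]
    exact X_sub_C_mul_mem (hs t (Multiset.mem_cons_self t s))
      (ih fun u hu ↦ hs u (Multiset.mem_cons_of_mem hu))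

theorem natDegree_le (hg : g ∈ signedBernsteinCone N) : g.natDegree ≤ N := by
  induction N generalizing g with
  | zero =>
    obtain ⟨c, -, rfl⟩ := mem_zero_iff.1 hg
    exact (natDegree_C c).le
  | succ N ih =>
    obtain ⟨u, hu, v, hv, rfl⟩ := mem_succ_iff.1 hg
    have hX {p q : ℝ[X]} (hp : p.natDegree ≤ 1) (hq : q.natDegree ≤ N) :
        (p * q).natDegree ≤ N + 1 := by
      have := natDegree_mul_le (p := p) (q := q)
      omega
    refine natDegree_add_le_of_degree_le (hX natDegree_X_le (ih hu)) (hX ?_ (ih hv))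
    exact natDegree_X_sub_C_le 1

theorem derivative_mem (hg : g ∈ signedBernsteinCone N) :
    derivative g ∈ signedBernsteinCone (N - 1) := by
  induction N generalizing g with
  | zero =>
    obtain ⟨c, -, rfl⟩ := mem_zero_iff.1 hg
    simp only [derivative_C, zero_mem]
  | succ N ih =>
    obtain ⟨u, hu, v, hv, rfl⟩ := mem_succ_iff.1 hg
    have hder : derivative (X * u + (X - 1) * v) =
        u + v + (X * derivative u + (X - 1) * derivative v) := by
      simp only [derivative_add, derivative_mul, derivative_sub, derivative_X, derivative_one]
      ring
    rw [hder]
    refine add_mem (add_mem hu hv) ?_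
    rcases N with _ | N
    · obtain ⟨⟨b, -, rfl⟩, c, -, rfl⟩ := And.intro (mem_zero_iff.1 hu) (mem_zero_iff.1 hv)
      simp
    · exact mem_succ_iff.2 ⟨_, ih hu, _, ih hv, rfl⟩

theorem X_mul_derivative_mem (hg : g ∈ signedBernsteinCone N) :
    X * derivative g ∈ signedBernsteinCone N := by
  rcases N with _ | N
  · obtain ⟨c, -, rfl⟩ := mem_zero_iff.1 hg
    simp only [derivative_C, mul_zero, zero_mem]
  · exact X_mul_mem (derivative_mem hg)

end signedBernsteinCone

end SignedBernsteinCone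

/-- The bilinear form `(f, g) ↦ J (f * g)` on polynomials attached to a moment functional `J`. -/
noncomputable def momentForm {R : Type*} [CommRing R] (J : R[X] →ₗ[R] R) :
    LinearMap.BilinForm R R[X] :=
  (LinearMap.mul R R[X]).compr₂ J

/-- `J` is a positive functional on `[0, 1]`, and `K` is a functional, positive on nonnegative
polynomials that do not vanish at `1`, from which `J` arises by multiplication by `1 - X`, up to
the factor `κ`. For `κ > 0` this makes `J` a Christoffel transform of `K`; the value `κ = 0`
covers functionals `K` concentrated at `1`. -/
structure IsChristoffelPair (κ : ℝ) (J K : ℝ[X] →ₗ[ℝ] ℝ) : Prop where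
  nonneg : 0 ≤ κ
  pos : ∀ f ≠ 0, (∀ t ∈ Icc (0 : ℝ) 1, 0 ≤ f.eval t) → 0 < J f
  lowered_pos : ∀ f, (∀ t ∈ Icc (0 : ℝ) 1, 0 ≤ f.eval t) → 0 < f.eval 1 → 0 < K f
  lowered_X_sub_one_mul : ∀ f, K ((X - 1) * f) = -(κ * J f)

namespace IsChristoffelPair

variable {κ : ℝ} {J K : ℝ[X] →ₗ[ℝ] ℝ} {m N : ℕ} {p q g : ℝ[X]}

theorem mul_self_pos (h : IsChristoffelPair κ J K) (hp : p ≠ 0) : 0 < J (p * p) :=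
  h.pos _ (mul_ne_zero hp hp) fun t _ ↦ by simpa only [eval_mul] using mul_self_nonneg (p.eval t)

theorem mul_mul_self_pos (h : IsChristoffelPair κ J K) (hp : p ≠ 0) (hq : q ≠ 0)
    (hnonneg : ∀ t ∈ Icc (0 : ℝ) 1, 0 ≤ q.eval t) : 0 < J (p * q * p) := by
  refine h.pos _ (mul_ne_zero (mul_ne_zero hp hq) hp) fun t ht ↦ ?_
  rw [mul_right_comm, eval_mul, eval_mul]
  exact mul_nonneg (mul_self_nonneg _) (hnonneg t ht)

theorem mul_mul_self_neg (h : IsChristoffelPair κ J K) (hp : p ≠ 0) (hq : q ≠ 0)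
    (hnonpos : ∀ t ∈ Icc (0 : ℝ) 1, q.eval t ≤ 0) : J (p * q * p) < 0 := by
  have hneg := h.mul_mul_self_pos hp (neg_ne_zero.2 hq) fun t ht ↦ by
    simpa only [eval_neg, neg_nonneg] using hnonpos t ht
  rwa [mul_neg, neg_mul, map_neg, neg_pos] at hneg

theorem lowered_mul_of_orthogonal (h : IsChristoffelPair κ J K)
    (hp : ∀ f : ℝ[X], f.degree < m → J (p * f) = 0) (hg : g.natDegree ≤ m) :
    K (p * g) = g.eval 1 * K p := by
  obtain ⟨f, hf⟩ := X_sub_C_dvd_sub_C_eval (a := 1) (p := g)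
  have hdeg : f.degree < m := by
    rcases eq_or_ne f 0 with rfl | hf0
    · exact degree_zero.trans_lt (WithBot.bot_lt_coe m)
    · have hg' := congrArg natDegree hf
      rw [natDegree_sub_C, natDegree_mul (X_sub_C_ne_zero 1) hf0, natDegree_X_sub_C] at hg'
      exact (natDegree_lt_iff_degree_lt hf0).1 (by omega)
  have hsplit : p * g = (X - 1) * (p * f) + g.eval 1 • p := by
    rw [smul_eq_C_mul, ← C_1]
    linear_combination p * hf
  rw [hsplit, map_add, h.lowered_X_sub_one_mul, hp f hdeg, map_smul, smul_eq_mul, mul_zero,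
    neg_zero, zero_add]

theorem eval_one_pos_of_orthogonal (h : IsChristoffelPair κ J K)
    (hp : IsMonicOrthogonal (momentForm J) m p) : 0 < p.eval 1 := by
  obtain ⟨hmonic, horth⟩ := hp
  obtain ⟨s, ρ, k, rfl, hs, hρ, hcard, hsign⟩ :=
    exists_eq_prod_X_sub_C_mul_of_sign zero_lt_one hmonic
  set P := (s.map fun t ↦ X - C t).prod
  have hP : P.IsMonicOfDegree s.card := isMonicOfDegree_prod_X_sub_C s
  have hPeval : 0 < P.eval 1 := eval_prod_X_sub_C_pos fun t ht ↦ (hs t ht).2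
  rcases Nat.eq_zero_or_pos k with rfl | hk
  · rwa [isMonicOfDegree_zero_iff.1 hρ, mul_one]
  · have hlt : P.degree < m := by
      rw [degree_eq_natDegree hP.ne_zero, hP.natDegree_eq]
      exact_mod_cast (by omega : s.card < m)
    have hzero : J (P * ρ * P) = 0 := horth P hlt
    rcases hsign with hsign | hsign
    · exact absurd hzero (h.mul_mul_self_pos hP.ne_zero hρ.ne_zero hsign).ne'
    · exact absurd hzero (h.mul_mul_self_neg hP.ne_zero hρ.ne_zero hsign).ne

theorem lowered_pos_of_orthogonal (h : IsChristoffelPair κ J K)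
    (hp : IsMonicOrthogonal (momentForm J) m p) : 0 < K p := by
  have heval := h.eval_one_pos_of_orthogonal hp
  have hsq : 0 < K (p * p) := h.lowered_pos _
    (fun t _ ↦ by simpa only [eval_mul] using mul_self_nonneg (p.eval t))
    (by simpa only [eval_mul] using mul_pos heval heval)
  rw [h.lowered_mul_of_orthogonal hp.2 hp.1.natDegree_eq.le] at hsq
  exact (mul_pos_iff_of_pos_left heval).1 hsq

theorem exists_isMonicOrthogonal (h : IsChristoffelPair κ J K) (m : ℕ) :
    ∃ p, IsMonicOrthogonal (momentForm J) m p :=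
  _root_.exists_isMonicOrthogonal (fun _ hf ↦ (h.mul_self_pos hf).ne') m

/-- `r` combines two consecutive `J`-orthogonal polynomials so that `K` vanishes on it. -/
theorem exists_quasiOrthogonal (h : IsChristoffelPair κ J K) (m : ℕ) :
    ∃ r : ℝ[X], r.IsMonicOfDegree (m + 1) ∧ (∀ g : ℝ[X], g.natDegree ≤ m → K (r * g) = 0) ∧
      (∀ g : ℝ[X], g.degree < m → J (r * g) = 0) ∧ J (r * X ^ m) ≤ 0 := by
  obtain ⟨p, hp⟩ := h.exists_isMonicOrthogonal (m + 1)
  obtain ⟨p₀, hp₀⟩ := h.exists_isMonicOrthogonal m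
  set c := K p / K p₀
  have hK₀ := h.lowered_pos_of_orthogonal hp₀
  have hc : 0 < c := div_pos (h.lowered_pos_of_orthogonal hp) hK₀
  have hcK : c * K p₀ = K p := div_mul_cancel₀ _ hK₀.ne'
  have hcle : (c • p₀).natDegree ≤ m := (natDegree_smul_le c p₀).trans hp₀.1.natDegree_eq.le
  have hmul (g : ℝ[X]) : (p - c • p₀) * g = p * g - c • (p₀ * g) := by
    rw [sub_mul, smul_mul_assoc]
  have hlt {g : ℝ[X]} (hg : g.degree ≤ m) : g.degree < (m + 1 : ℕ) :=
    hg.trans_lt (WithBot.coe_lt_coe.2 m.lt_succ_self)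
  refine ⟨p - c • p₀, hp.1.sub (Nat.lt_succ_of_le hcle), fun g hg ↦ ?_, fun g hg ↦ ?_, ?_⟩
  · rw [hmul, map_sub, map_smul, h.lowered_mul_of_orthogonal hp.2 (hg.trans m.le_succ),
      h.lowered_mul_of_orthogonal hp₀.2 hg, smul_eq_mul, mul_left_comm, hcK, sub_self]
  · have hp₀g : J (p₀ * g) = 0 := hp₀.2 g hg
    have hpg : J (p * g) = 0 := hp.2 g (hlt hg.le)
    rw [hmul, map_sub, map_smul, hpg, hp₀g, smul_zero, sub_zero]
  · have hpX : J (p * X ^ m) = 0 := hp.2 _ (hlt (degree_X_pow_le m))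
    have hp₀X : J (p₀ * X ^ m) = J (p₀ * p₀) := hp₀.apply_X_pow
    rw [hmul, map_sub, map_smul, hpX, hp₀X, zero_sub, smul_eq_mul]
    exact neg_nonpos.2 (mul_pos hc (h.mul_self_pos hp₀.1.ne_zero)).le

theorem lowered_mul_nonneg (h : IsChristoffelPair κ J K)
    (hJ : ∀ N < m, ∀ g ∈ signedBernsteinCone N, J (q * g) ≤ 0) (hK : 0 ≤ K q) (hN : N ≤ m)
    (hg : g ∈ signedBernsteinCone N) : 0 ≤ K (q * g) := by
  induction N generalizing g with
  | zero =>
    obtain ⟨c, hc, rfl⟩ := signedBernsteinCone.mem_zero_iff.1 hg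
    rw [mul_comm, ← smul_eq_C_mul, map_smul]
    exact mul_nonneg hc hK
  | succ N ih =>
    obtain ⟨u, hu, v, hv, rfl⟩ := signedBernsteinCone.mem_succ_iff.1 hg
    have hsplit : q * (X * u + (X - 1) * v) = q * u + (X - 1) * (q * (u + v)) := by ring
    rw [hsplit, map_add, h.lowered_X_sub_one_mul]
    have hu' := ih (by omega) hu
    have huv := mul_nonpos_of_nonneg_of_nonpos h.nonneg (hJ N hN (u + v) (add_mem hu hv))
    linarith

/-- A second factor `X - C u` with `u` outside `(0, 1)` is impossible, since `q` would then be
multiplied to a polynomial of constant sign by an element of the cone. -/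
theorem exists_eq_prod_X_sub_C_or_mul_X_sub_C (h : IsChristoffelPair κ J K)
    (hq : q.IsMonicOfDegree m)
    (hJ : ∀ N < m, ∀ g ∈ signedBernsteinCone N, J (q * g) ≤ 0) :
    ∃ s : Multiset ℝ, (∀ t ∈ s, t ∈ Ioo (0 : ℝ) 1) ∧ (q = (s.map fun t ↦ X - C t).prod ∨
      ∃ u : ℝ, 1 ≤ u ∧ q = (s.map fun t ↦ X - C t).prod * (X - C u)) := by
  obtain ⟨s, ρ, k, rfl, hs, hρ, rfl, hsign⟩ := exists_eq_prod_X_sub_C_mul_of_sign zero_lt_one hq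
  refine ⟨s, hs, ?_⟩
  have hPcone :=
    signedBernsteinCone.prod_X_sub_C_mem fun t ht ↦ Ioo_subset_Icc_self (hs t ht)
  set P := (s.map fun t ↦ X - C t).prod
  have hP0 : P ≠ 0 := (isMonicOfDegree_prod_X_sub_C s).ne_zero
  rcases Nat.eq_zero_or_pos k with rfl | hk
  · left
    rw [isMonicOfDegree_zero_iff.1 hρ, mul_one]
  have hnonpos : ∀ t ∈ Icc (0 : ℝ) 1, ρ.eval t ≤ 0 := hsign.resolve_left fun hnonneg ↦
    (hJ s.card (by omega) P hPcone).not_gt (h.mul_mul_self_pos hP0 hρ.ne_zero hnonneg)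
  have hk1 : k = 1 := by
    by_contra hk1
    refine (hJ (s.card + 1) (by omega) _ (signedBernsteinCone.X_sub_one_mul_mem hPcone)).not_gt ?_
    have hassoc : P * ρ * ((X - 1) * P) = P * (ρ * (X - 1)) * P := by ring
    rw [hassoc]
    refine h.mul_mul_self_pos hP0 (mul_ne_zero hρ.ne_zero (X_sub_C_ne_zero 1)) fun t ht ↦ ?_
    simpa only [eval_mul, eval_sub, eval_X, eval_one] using
      mul_nonneg_of_nonpos_of_nonpos (hnonpos t ht) (sub_nonpos.2 ht.2)
  subst hk1
  obtain ⟨u, rfl⟩ := isMonicOfDegree_one_iff.1 hρ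
  refine Or.inr ⟨-u, ?_, by rw [C_neg, sub_neg_eq_add]⟩
  simpa only [eval_add, eval_X, eval_C, add_comm, ← le_neg_iff_add_nonpos_left] using
    hnonpos 1 (right_mem_Icc.2 zero_le_one)

theorem exists_eq_prod_X_sub_C (h : IsChristoffelPair κ J K) (hq : q.IsMonicOfDegree m)
    (hJ : ∀ N < m, ∀ g ∈ signedBernsteinCone N, J (q * g) ≤ 0) (hK : 0 ≤ K q) :
    ∃ s : Multiset ℝ, (∀ t ∈ s, t ∈ Icc (0 : ℝ) 1) ∧ q = (s.map fun t ↦ X - C t).prod := by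
  obtain ⟨s, hs, hqs⟩ := h.exists_eq_prod_X_sub_C_or_mul_X_sub_C hq hJ
  have hsIcc : ∀ t ∈ s, t ∈ Icc (0 : ℝ) 1 := fun t ht ↦ Ioo_subset_Icc_self (hs t ht)
  obtain rfl | ⟨u, hu, rfl⟩ := hqs
  · exact ⟨s, hsIcc, rfl⟩
  have hPcone := signedBernsteinCone.prod_X_sub_C_mem hsIcc
  have hPeval := eval_prod_X_sub_C_pos fun t ht ↦ (hs t ht).2
  have hP := isMonicOfDegree_prod_X_sub_C s
  set P := (s.map fun t ↦ X - C t).prod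
  have hcard : s.card ≤ m := by
    rw [← hq.natDegree_eq, (hP.mul (isMonicOfDegree_X_sub_one u)).natDegree_eq]
    exact Nat.le_succ _
  have hu1 : u ≤ 1 := by
    by_contra! hu1
    refine (h.lowered_mul_nonneg hJ hK hcard hPcone).not_gt (neg_pos.1 ?_)
    have hsq : -(P * (X - C u) * P) = P * P * (C u - X) := by ring
    rw [← map_neg, hsq]
    refine h.lowered_pos _ (fun t ht ↦ ?_) ?_ <;>
      simp only [eval_mul, eval_sub, eval_C, eval_X]
    · exact mul_nonneg (mul_self_nonneg _) (sub_nonneg.2 (ht.2.trans hu))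
    · exact mul_pos (mul_pos hPeval hPeval) (sub_pos.2 hu1)
  refine ⟨1 ::ₘ s, Multiset.forall_mem_cons.2 ⟨right_mem_Icc.2 zero_le_one, hsIcc⟩, ?_⟩
  rw [Multiset.map_cons, Multiset.prod_cons, mul_comm, le_antisymm hu1 hu]

end IsChristoffelPair

section FoldedSobolev

/-- The operator by which `x * d/dx` acts on `f` in `x ^ e * f (x ^ 2)`. -/
noncomputable def foldedEuler (R : Type*) [CommSemiring R] (e : ℕ) : R[X] →ₗ[R] R[X] :=
  e • LinearMap.id + 2 • (LinearMap.mulLeft R X ∘ₗ derivative)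

/-- The operator by which `d²/dx²` acts on `f` in `x ^ e * f (x ^ 2)` when `e ≤ 1`. -/
noncomputable def foldedSecondDeriv (R : Type*) [CommSemiring R] (e : ℕ) : R[X] →ₗ[R] R[X] :=
  (4 * e + 2) • derivative + 4 • (LinearMap.mulLeft R X ∘ₗ derivative ∘ₗ derivative)

section CommSemiring

variable {R : Type*} [CommSemiring R] {m : ℕ} {g : R[X]}

theorem foldedEuler_apply (e : ℕ) (g : R[X]) :
    foldedEuler R e g = e • g + 2 • (X * derivative g) :=
  rfl

theorem foldedSecondDeriv_apply (e : ℕ) (g : R[X]) :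
    foldedSecondDeriv R e g = (4 * e + 2) • derivative g + 4 • (X * derivative (derivative g)) :=
  rfl

theorem natDegree_X_mul_derivative_le (g : R[X]) : (X * derivative g).natDegree ≤ g.natDegree := by
  refine natDegree_le_iff_coeff_eq_zero.2 fun k hk ↦ ?_
  obtain ⟨k, rfl⟩ := Nat.exists_eq_add_one_of_ne_zero (Nat.ne_zero_of_lt hk)
  rw [coeff_X_mul, coeff_derivative, coeff_eq_zero_of_natDegree_lt hk, zero_mul]

theorem natDegree_foldedEuler_le (e : ℕ) (g : R[X]) :
    (foldedEuler R e g).natDegree ≤ g.natDegree :=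
  natDegree_add_le_of_degree_le (natDegree_smul_le _ _)
    ((natDegree_smul_le _ _).trans (natDegree_X_mul_derivative_le g))

theorem degree_foldedSecondDeriv_lt (e : ℕ) (hg : g.natDegree ≤ m) :
    (foldedSecondDeriv R e g).degree < m := by
  rw [foldedSecondDeriv_apply]
  rcases m with _ | m
  · rw [eq_C_of_natDegree_le_zero hg]
    simp
  · have hg' : (derivative g).natDegree ≤ m := (natDegree_derivative_le g).trans (by omega)
    refine degree_lt_of_natDegree_lt (Nat.lt_succ_of_le ?_)
    exact natDegree_add_le_of_degree_le ((natDegree_smul_le _ _).trans hg')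
      ((natDegree_smul_le _ _).trans ((natDegree_X_mul_derivative_le _).trans hg'))

end CommSemiring

section CommRing

variable {R : Type*} [CommRing R]

/-- The Sobolev form `∫ P * G + lam * ∫ P' * G'` for `P = x ^ e * q (x ^ 2)` and
`G = x ^ e * g (x ^ 2)`, in the variable `t = x ^ 2`. Integration by parts has moved both
derivatives to `g`, which brings in the functional `K` paired with `J`. -/
noncomputable def foldedSobolevForm (J K : R[X] →ₗ[R] R) (lam : R) (e : ℕ) :
    LinearMap.BilinForm R R[X] :=
  momentForm J +
    lam • ((momentForm K).compl₂ (foldedEuler R e) - (momentForm J).compl₂ (foldedSecondDeriv R e))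

theorem foldedSobolevForm_apply (J K : R[X] →ₗ[R] R) (lam : R) (e : ℕ) (q g : R[X]) :
    foldedSobolevForm J K lam e q g =
      J (q * g) + lam * (K (q * foldedEuler R e g) - J (q * foldedSecondDeriv R e g)) :=
  rfl

variable {J K : R[X] →ₗ[R] R} {lam : R} {e m : ℕ} {r g : R[X]}

theorem foldedSobolevForm_of_quasiOrthogonal (hK : ∀ g : R[X], g.natDegree ≤ m → K (r * g) = 0)
    (hJ : ∀ g : R[X], g.degree < m → J (r * g) = 0) (hg : g.natDegree ≤ m) :
    foldedSobolevForm J K lam e r g = J (r * g) := by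
  rw [foldedSobolevForm_apply, hK _ ((natDegree_foldedEuler_le e g).trans hg),
    hJ _ (degree_foldedSecondDeriv_lt e hg), sub_zero, mul_zero, add_zero]

end CommRing

variable {J K : ℝ[X] →ₗ[ℝ] ℝ} {κ lam : ℝ} {e m N : ℕ} {q g : ℝ[X]}

theorem foldedEuler_mem (e : ℕ) (hg : g ∈ signedBernsteinCone N) :
    foldedEuler ℝ e g ∈ signedBernsteinCone N :=
  add_mem (nsmul_mem hg e) (nsmul_mem (signedBernsteinCone.X_mul_derivative_mem hg) 2)

theorem foldedSecondDeriv_mem (e : ℕ) (hg : g ∈ signedBernsteinCone N) :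
    foldedSecondDeriv ℝ e g ∈ signedBernsteinCone (N - 1) :=
  add_mem (nsmul_mem (signedBernsteinCone.derivative_mem hg) _) (nsmul_mem
    (signedBernsteinCone.X_mul_derivative_mem (signedBernsteinCone.derivative_mem hg)) 4)

namespace IsChristoffelPair

theorem mul_nonpos_of_foldedSobolevForm_eq_zero (h : IsChristoffelPair κ J K) (hlam : 0 ≤ lam)
    (hJ : ∀ N < m, ∀ g ∈ signedBernsteinCone N, J (q * g) ≤ 0) (hK : 0 ≤ K q)
    (hg : g ∈ signedBernsteinCone m) (hS : foldedSobolevForm J K lam e q g = 0) :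
    J (q * g) ≤ 0 := by
  have hEuler : 0 ≤ K (q * foldedEuler ℝ e g) :=
    h.lowered_mul_nonneg hJ hK le_rfl (foldedEuler_mem e hg)
  have hSecond : J (q * foldedSecondDeriv ℝ e g) ≤ 0 := by
    rcases m with _ | m
    · obtain ⟨c, -, rfl⟩ := signedBernsteinCone.mem_zero_iff.1 hg
      simp [foldedSecondDeriv_apply]
    · exact hJ m m.lt_succ_self _ (foldedSecondDeriv_mem e hg)
  rw [foldedSobolevForm_apply] at hS
  have := mul_nonneg hlam (sub_nonneg.2 (hSecond.trans hEuler))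
  linarith

/-- Subtracting from `q` the quasi-orthogonal polynomial with the same leading term lowers the
degree; the sign of the new leading coefficient follows from positivity of the Sobolev form. -/
theorem exists_natDegree_le_of_foldedSobolevForm_orthogonal (h : IsChristoffelPair κ J K)
    (hpos : ∀ f ≠ 0, 0 < foldedSobolevForm J K lam e f f) (hq : q.natDegree ≤ m + 1)
    (hcoeff : 0 ≤ q.coeff (m + 1))
    (horth : ∀ g : ℝ[X], g.natDegree ≤ m → foldedSobolevForm J K lam e q g = 0) :
    ∃ D : ℝ[X], D.natDegree ≤ m ∧ 0 ≤ D.coeff m ∧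
      (∀ g : ℝ[X], g.degree < m → foldedSobolevForm J K lam e D g = 0) ∧
      (∀ g : ℝ[X], g.degree < m → J (q * g) = J (D * g)) ∧ K q = K D := by
  obtain ⟨r, hr, hKr, hJr, hJrX⟩ := h.exists_quasiOrthogonal m
  set γ := q.coeff (m + 1) with hγ
  set D := q - γ • r with hD
  have hq_eq : q = D + γ • r := (sub_add_cancel _ _).symm
  have hDdeg : D.natDegree ≤ m := by
    refine natDegree_le_iff_coeff_eq_zero.2 fun k hk ↦ ?_
    rcases (Nat.succ_le_of_lt hk).eq_or_lt with rfl | hk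
    · have hr1 : r.coeff (m + 1) = 1 := hr.natDegree_eq ▸ hr.monic.coeff_natDegree
      simp only [hD, coeff_sub, coeff_smul, Nat.succ_eq_add_one, hr1, ← hγ, smul_eq_mul, mul_one,
        sub_self]
    · rw [hD, coeff_sub, coeff_smul, coeff_eq_zero_of_natDegree_lt (hq.trans_lt hk),
        coeff_eq_zero_of_natDegree_lt (hr.natDegree_eq.trans_lt hk), smul_zero, sub_zero]
  have hSD (g : ℝ[X]) (hg : g.natDegree ≤ m) :
      foldedSobolevForm J K lam e D g = -(γ * J (r * g)) := by
    rw [hD, map_sub, LinearMap.sub_apply, horth g hg, map_smul, LinearMap.smul_apply,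
      foldedSobolevForm_of_quasiOrthogonal hKr hJr hg, zero_sub, smul_eq_mul]
  have hDorth (g : ℝ[X]) (hg : g.degree < m) : foldedSobolevForm J K lam e D g = 0 := by
    rw [hSD g (natDegree_le_of_degree_le hg.le), hJr g hg, mul_zero, neg_zero]
  refine ⟨D, hDdeg, ?_, hDorth, fun g hg ↦ ?_, ?_⟩
  · rcases eq_or_ne D 0 with hD0 | hD0
    · rw [hD0, coeff_zero]
    · have hself := hpos D hD0
      rw [apply_self_eq_coeff_mul_apply_X_pow hDdeg hDorth, hSD _ (natDegree_X_pow_le m)] at hself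
      exact (pos_of_mul_pos_left hself
        (neg_nonneg.2 (mul_nonpos_of_nonneg_of_nonpos hcoeff hJrX))).le
  · rw [hq_eq, add_mul, smul_mul_assoc, map_add, map_smul, hJr g hg, smul_zero, add_zero]
  · have hKr1 : K r = 0 := by simpa only [mul_one] using hKr 1 (natDegree_one.trans_le m.zero_le)
    rw [hq_eq, map_add, map_smul, hKr1, smul_zero, add_zero]

theorem foldedSobolevForm_signs (h : IsChristoffelPair κ J K) (hlam : 0 ≤ lam)
    (hpos : ∀ f ≠ 0, 0 < foldedSobolevForm J K lam e f f) (hq : q.natDegree ≤ m)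
    (hcoeff : 0 ≤ q.coeff m)
    (horth : ∀ g : ℝ[X], g.degree < m → foldedSobolevForm J K lam e q g = 0) :
    (∀ N < m, ∀ g ∈ signedBernsteinCone N, J (q * g) ≤ 0) ∧ 0 ≤ K q := by
  induction m generalizing q with
  | zero =>
    refine ⟨fun N hN ↦ absurd hN N.not_lt_zero, ?_⟩
    rw [eq_C_of_natDegree_le_zero hq, ← mul_one (C _), ← smul_eq_C_mul, map_smul]
    exact mul_nonneg hcoeff (h.lowered_pos 1 (by simp) (by simp)).le
  | succ m ih =>
    have horth' (g : ℝ[X]) (hg : g.natDegree ≤ m) : foldedSobolevForm J K lam e q g = 0 :=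
      horth g (degree_lt_of_natDegree_lt (Nat.lt_succ_of_le hg))
    obtain ⟨D, hDdeg, hDcoeff, hDorth, hJqD, hKqD⟩ :=
      h.exists_natDegree_le_of_foldedSobolevForm_orthogonal hpos hq hcoeff horth'
    obtain ⟨hJD, hKD⟩ := ih hDdeg hDcoeff hDorth
    have hKq : 0 ≤ K q := hKqD ▸ hKD
    have hJq : ∀ N < m, ∀ g ∈ signedBernsteinCone N, J (q * g) ≤ 0 := fun N hN g hg ↦ by
      rw [hJqD g (degree_lt_of_natDegree_lt
        ((signedBernsteinCone.natDegree_le hg).trans_lt hN))]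
      exact hJD N hN g hg
    refine ⟨fun N hN g hg ↦ ?_, hKq⟩
    rcases (Nat.lt_succ_iff.1 hN).lt_or_eq with hN | rfl
    · exact hJq N hN g hg
    · exact h.mul_nonpos_of_foldedSobolevForm_eq_zero hlam hJq hKq hg
        (horth' g (signedBernsteinCone.natDegree_le hg))

theorem exists_eq_prod_X_sub_C_of_isMonicOrthogonal (h : IsChristoffelPair κ J K) (hlam : 0 ≤ lam)
    (hpos : ∀ f ≠ 0, 0 < foldedSobolevForm J K lam e f f)
    (hq : IsMonicOrthogonal (foldedSobolevForm J K lam e) m q) :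
    ∃ s : Multiset ℝ, (∀ t ∈ s, t ∈ Icc (0 : ℝ) 1) ∧ q = (s.map fun t ↦ X - C t).prod := by
  obtain ⟨⟨rfl, hmonic⟩, horth⟩ := hq
  obtain ⟨hJ, hK⟩ := h.foldedSobolevForm_signs hlam hpos le_rfl
    (hmonic.coeff_natDegree ▸ zero_le_one) horth
  exact h.exists_eq_prod_X_sub_C ⟨rfl, hmonic⟩ hJ hK

end IsChristoffelPair

end FoldedSobolev

section ParityLift

/-- The polynomial `x ^ e * f (x ^ 2)`; every polynomial of parity `e` arises in this way. -/
noncomputable def parityLift (R : Type*) [CommSemiring R] (e : ℕ) : R[X] →ₗ[R] R[X] :=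
  LinearMap.mulLeft R (X ^ e) ∘ₗ (expand R 2).toLinearMap

section CommSemiring

variable {R : Type*} [CommSemiring R]

theorem parityLift_apply (e : ℕ) (f : R[X]) : parityLift R e f = X ^ e * expand R 2 f :=
  rfl

theorem eval_parityLift (e : ℕ) (f : R[X]) (x : R) :
    (parityLift R e f).eval x = x ^ e * f.eval (x ^ 2) := by
  rw [parityLift_apply, eval_mul, eval_pow, eval_X, expand_eval]

theorem parityLift_mul_parityLift (d e : ℕ) (f g : R[X]) :
    parityLift R d f * parityLift R e g = parityLift R (d + e) (f * g) := by
  simp only [parityLift_apply, map_mul]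
  ring

theorem parityLift_X_mul (e : ℕ) (f : R[X]) :
    parityLift R e (X * f) = X ^ 2 * parityLift R e f := by
  simp only [parityLift_apply, map_mul, expand_X]
  ring

section NoZeroDivisors

variable [NoZeroDivisors R] [Nontrivial R] {e m : ℕ} {f : R[X]}

theorem parityLift_ne_zero (hf : f ≠ 0) : parityLift R e f ≠ 0 :=
  mul_ne_zero (pow_ne_zero e X_ne_zero) ((expand_ne_zero two_pos).2 hf)

theorem natDegree_parityLift (hf : f ≠ 0) : (parityLift R e f).natDegree = e + 2 * f.natDegree := by
  rw [parityLift_apply, natDegree_mul (pow_ne_zero e X_ne_zero) ((expand_ne_zero two_pos).2 hf),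
    natDegree_X_pow, natDegree_expand, mul_comm]

theorem degree_parityLift_lt (hf : f.degree < m) :
    (parityLift R e f).degree < (e + 2 * m : ℕ) := by
  rcases eq_or_ne f 0 with rfl | hf0
  · rw [map_zero]
    exact degree_zero.trans_lt (WithBot.bot_lt_coe _)
  · refine degree_lt_of_natDegree_lt ?_
    have := (natDegree_lt_iff_degree_lt hf0).2 hf
    rw [natDegree_parityLift hf0]
    omega

end NoZeroDivisors

theorem monic_of_monic_parityLift {e : ℕ} {f : R[X]} (hf : (parityLift R e f).Monic) : f.Monic :=
  (monic_expand_iff two_pos).1 ((monic_X_pow e).of_mul_monic_left hf)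

theorem X_mul_derivative_parityLift (e : ℕ) (f : R[X]) :
    X * derivative (parityLift R e f) = parityLift R e (foldedEuler R e f) := by
  rw [foldedEuler_apply, map_add, map_nsmul, map_nsmul, parityLift_X_mul]
  rcases e with _ | e <;>
    simp only [parityLift_apply, derivative_mul, derivative_X_pow, derivative_expand, map_natCast,
      nsmul_eq_mul, pow_zero, derivative_one, Nat.add_sub_cancel] <;>
    push_cast <;> ring

theorem derivative_derivative_parityLift {e : ℕ} (he : e ≤ 1) (f : R[X]) :
    derivative (derivative (parityLift R e f)) = parityLift R e (foldedSecondDeriv R e f) := by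
  rw [foldedSecondDeriv_apply, map_add, map_nsmul, map_nsmul, parityLift_X_mul]
  interval_cases e <;>
    simp [parityLift_apply, derivative_expand, nsmul_eq_mul] <;> ring

end CommSemiring

section CommRing

variable {R : Type*} [CommRing R] [NoZeroDivisors R] [NeZero (2 : R)] {n : ℕ}

theorem coeff_eq_zero_of_comp_neg_X {P : R[X]} (hP : (-1) ^ n * P.comp (-X) = P) {k : ℕ}
    (hk : Odd (n + k)) : P.coeff k = 0 := by
  have hk' : P.coeff k = (-1) ^ (n + k) * P.coeff k := by
    have hX : (-X : R[X]) = C (-1) * X := by rw [C_neg, C_1, neg_one_mul]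
    have hC : ((-1) ^ n : R[X]) = C ((-1) ^ n) := by rw [C_pow, C_neg, C_1]
    conv_lhs => rw [← hP, hX, hC, coeff_C_mul, comp_C_mul_X_coeff]
    ring
  rw [hk.neg_one_pow] at hk'
  have htwo : 2 * P.coeff k = 0 := by linear_combination hk'
  exact (mul_eq_zero.1 htwo).resolve_left two_ne_zero

theorem exists_parityLift_eq {P : R[X]} (hP : (-1) ^ n * P.comp (-X) = P) :
    ∃ f, parityLift R (n % 2) f = P := by
  have hcoeff (k : ℕ) (hk : Odd (n + k)) : P.coeff k = 0 := coeff_eq_zero_of_comp_neg_X hP hk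
  simp only [Nat.odd_iff] at hcoeff
  rcases Nat.mod_two_eq_zero_or_one n with hn | hn
  · refine ⟨contract 2 P, ext fun k ↦ ?_⟩
    rw [parityLift_apply, hn, pow_zero, one_mul, coeff_expand two_pos]
    split_ifs with hk
    · rw [coeff_contract two_ne_zero, Nat.div_mul_cancel hk]
    · exact (hcoeff k (by omega)).symm
  · refine ⟨contract 2 P.divX, ext fun k ↦ ?_⟩
    rw [parityLift_apply, hn, pow_one]
    rcases k with _ | k
    · rw [coeff_X_mul_zero, hcoeff 0 (by omega)]
    rw [coeff_X_mul, coeff_expand two_pos]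
    split_ifs with hk
    · rw [coeff_contract two_ne_zero, coeff_divX, Nat.div_mul_cancel hk]
    · exact (hcoeff (k + 1) (by omega)).symm

end CommRing

end ParityLift

section Gegenbauer

variable {a : ℝ≥0} {lam : ℝ} {e n : ℕ}

theorem one_sub_sq_nonneg {x : ℝ} (hx : x ∈ Icc (-1 : ℝ) 1) : 0 ≤ 1 - x ^ 2 := by
  nlinarith [hx.1, hx.2]

theorem one_sub_sq_pos {x : ℝ} (hx : x ∈ Ioo (-1 : ℝ) 1) : 0 < 1 - x ^ 2 := by
  nlinarith [hx.1, hx.2]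

theorem hasDerivAt_one_sub_sq (x : ℝ) : HasDerivAt (fun x : ℝ ↦ 1 - x ^ 2) (-(2 * x)) x := by
  simpa using (hasDerivAt_pow 2 x).const_sub 1

theorem continuous_eval_mul_weight (a : ℝ≥0) (f : ℝ[X]) :
    Continuous fun x : ℝ ↦ f.eval x * (1 - x ^ 2) ^ (a : ℝ) :=
  f.continuous.mul (Continuous.rpow_const (by fun_prop) fun _ ↦ Or.inr a.coe_nonneg)

/-- The moment functional of the Gegenbauer weight `(1 - x ^ 2) ^ a` on `[-1, 1]`. -/
noncomputable def gegFunctional (a : ℝ≥0) : ℝ[X] →ₗ[ℝ] ℝ where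
  toFun f := ∫ x in (-1 : ℝ)..1, f.eval x * (1 - x ^ 2) ^ (a : ℝ)
  map_add' f g := by
    rw [← intervalIntegral.integral_add
      ((continuous_eval_mul_weight a f).intervalIntegrable _ _)
      ((continuous_eval_mul_weight a g).intervalIntegrable _ _)]
    simp only [eval_add, add_mul]
  map_smul' c f := by
    rw [RingHom.id_apply, smul_eq_mul, ← intervalIntegral.integral_const_mul]
    simp only [eval_smul, smul_eq_mul, mul_assoc]

/-- The functional of the weight `2 * a * (1 - x ^ 2) ^ (a - 1)`, understood at `a = 0` as the sum
of the point masses at `1` and `-1`. Integration by parts gives the expression used here, which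
covers both cases. -/
noncomputable def loweredGegFunctional (a : ℝ≥0) : ℝ[X] →ₗ[ℝ] ℝ :=
  (2 * a + 1 : ℝ) • gegFunctional a + gegFunctional a ∘ₗ LinearMap.mulLeft ℝ X ∘ₗ derivative

theorem gegFunctional_apply (a : ℝ≥0) (f : ℝ[X]) :
    gegFunctional a f = ∫ x in (-1 : ℝ)..1, f.eval x * (1 - x ^ 2) ^ (a : ℝ) :=
  rfl

theorem loweredGegFunctional_apply (a : ℝ≥0) (f : ℝ[X]) :
    loweredGegFunctional a f =
      (2 * a + 1) * gegFunctional a f + gegFunctional a (X * derivative f) :=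
  rfl

theorem gegInner_eq_gegFunctional {α : ℝ} (ha : (a : ℝ) = α - 1 / 2) (f g : ℝ[X]) :
    gegInner α f g = gegFunctional a (f * g) := by
  rw [gegFunctional_apply, intervalIntegral.integral_of_le (by norm_num),
    integral_Ioc_eq_integral_Ioo, gegInner, ha]
  simp only [eval_mul]

theorem gegFunctional_comp_neg_X (a : ℝ≥0) (f : ℝ[X]) :
    gegFunctional a (f.comp (-X)) = gegFunctional a f := by
  have hneg := intervalIntegral.integral_comp_neg (a := (-1 : ℝ)) (b := 1)
    fun x ↦ f.eval x * (1 - x ^ 2) ^ (a : ℝ)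
  rw [neg_neg] at hneg
  rw [gegFunctional_apply, gegFunctional_apply, ← hneg]
  simp only [eval_comp, eval_neg, eval_X, neg_sq]

theorem gegFunctional_pos {f : ℝ[X]} (hf : f ≠ 0)
    (hnonneg : ∀ x ∈ Icc (-1 : ℝ) 1, 0 ≤ f.eval x) : 0 < gegFunctional a f := by
  obtain ⟨c, hc, hfc⟩ :=
    (Ioo_infinite (by norm_num : (-1 : ℝ) < 1)).exists_notMem_finite (f.rootSet_finite ℝ)
  have hc' := Ioo_subset_Icc_self hc
  have hfc' : f.eval c ≠ 0 := fun h0 ↦ hfc ((mem_rootSet_of_ne hf).2 (by rwa [coe_aeval_eq_eval]))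
  refine intervalIntegral.integral_pos (by norm_num)
    (continuous_eval_mul_weight a f).continuousOn (fun x hx ↦ ?_) ⟨c, hc', ?_⟩
  · have hx' := Ioc_subset_Icc_self hx
    exact mul_nonneg (hnonneg x hx') (rpow_nonneg (one_sub_sq_nonneg hx') _)
  · exact mul_pos ((hnonneg c hc').lt_of_ne' hfc') (rpow_pos_of_pos (one_sub_sq_pos hc) _)

theorem gegFunctional_mul_self_pos {f : ℝ[X]} (hf : f ≠ 0) : 0 < gegFunctional a (f * f) :=
  gegFunctional_pos (mul_ne_zero hf hf) fun x _ ↦ by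
    simpa only [eval_mul] using mul_self_nonneg (f.eval x)

theorem gegFunctional_one_sub_sq_mul_derivative (a : ℝ≥0) (f : ℝ[X]) :
    gegFunctional a ((1 - X ^ 2) * derivative f) = 2 * (a + 1) * gegFunctional a (X * f) := by
  have ha : (a : ℝ) + 1 ≠ 0 := a.coe_nonneg.trans_lt (lt_add_one _) |>.ne'
  set G := (1 - X ^ 2) * derivative f - (2 * (a + 1) : ℝ) • (X * f) with hG
  have hderiv : ∀ x ∈ uIcc (-1 : ℝ) 1,
      HasDerivAt (fun x : ℝ ↦ (1 - x ^ 2) ^ ((a : ℝ) + 1) * f.eval x)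
        (G.eval x * (1 - x ^ 2) ^ (a : ℝ)) x := fun x hx ↦ by
    rw [uIcc_of_le (by norm_num)] at hx
    have hpow := (hasDerivAt_one_sub_sq x).rpow_const (p := a + 1)
      (Or.inr (le_add_of_nonneg_left a.coe_nonneg))
    refine (hpow.mul (f.hasDerivAt x)).congr_deriv ?_
    rw [rpow_add_one' (one_sub_sq_nonneg hx) ha, add_sub_cancel_right]
    simp only [hG, eval_sub, eval_mul, eval_one, eval_pow, eval_X, eval_smul, smul_eq_mul]
    ring
  have hint : gegFunctional a G = 0 := by
    rw [gegFunctional_apply, intervalIntegral.integral_eq_sub_of_hasDerivAt hderiv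
      ((continuous_eval_mul_weight a G).intervalIntegrable _ _)]
    simp [zero_rpow ha]
  rwa [hG, map_sub, map_smul, smul_eq_mul, sub_eq_zero] at hint

theorem gegFunctional_derivative (a : ℝ≥0) (f : ℝ[X]) :
    gegFunctional a (derivative f) = loweredGegFunctional a (X * f) := by
  have hibp := gegFunctional_one_sub_sq_mul_derivative a f
  have hsplit : X * derivative (X * f) = X * f + derivative f - (1 - X ^ 2) * derivative f := by
    rw [derivative_mul, derivative_X]
    ring
  rw [loweredGegFunctional_apply, hsplit, map_sub, map_add]
  linarith

theorem loweredGegFunctional_sq_sub_one_mul (a : ℝ≥0) (f : ℝ[X]) :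
    loweredGegFunctional a ((X ^ 2 - 1) * f) = -(2 * a * gegFunctional a f) := by
  have hibp := gegFunctional_one_sub_sq_mul_derivative a (X * f)
  have hsplit : X * derivative ((X ^ 2 - 1) * f) =
      (2 : ℝ) • (X * (X * f)) - (X ^ 2 - 1) * f - (1 - X ^ 2) * derivative (X * f) := by
    simp only [derivative_mul, derivative_sub, derivative_X_pow, derivative_one, derivative_X,
      smul_eq_C_mul, map_ofNat, Nat.cast_ofNat]
    ring
  have hX : (X ^ 2 - 1) * f = X * (X * f) - f := by ring
  rw [loweredGegFunctional_apply, hsplit, map_sub, map_sub, map_smul, hibp, hX, map_sub,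
    smul_eq_mul]
  ring

/-- The integrand is the derivative of `x * f x * (1 - x ^ 2) ^ a` plus the nonnegative function
`2 * a * f x * (1 - x ^ 2) ^ (a - 1)`. -/
theorem le_loweredGegFunctional (a : ℝ≥0) {f : ℝ[X]}
    (hf : ∀ x ∈ Icc (-1 : ℝ) 1, 0 ≤ f.eval x) :
    (f.eval 1 + f.eval (-1)) * 0 ^ (a : ℝ) ≤ loweredGegFunctional a f := by
  set G := (2 * a + 1 : ℝ) • f + X * derivative f with hG
  have hderiv : ∀ x ∈ Ioo (-1 : ℝ) 1,
      HasDerivAt (fun x : ℝ ↦ (X * f).eval x * (1 - x ^ 2) ^ (a : ℝ))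
        (G.eval x * (1 - x ^ 2) ^ (a : ℝ) - 2 * a * f.eval x * (1 - x ^ 2) ^ ((a : ℝ) - 1)) x :=
    fun x hx ↦ by
      have hx0 := one_sub_sq_pos hx
      have hpow := (hasDerivAt_one_sub_sq x).rpow_const (p := a) (Or.inl hx0.ne')
      refine (((X * f).hasDerivAt x).mul hpow).congr_deriv ?_
      rw [rpow_sub_one hx0.ne']
      simp only [hG, derivative_mul, derivative_X, eval_add, eval_mul, eval_X, eval_one,
        eval_smul, smul_eq_mul]
      field_simp
      ring
  have hle := intervalIntegral.sub_le_integral_of_hasDeriv_right_of_le (by norm_num)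
    (continuous_eval_mul_weight a (X * f)).continuousOn
    (fun x hx ↦ (hderiv x hx).hasDerivWithinAt)
    ((continuous_eval_mul_weight a G).continuousOn.integrableOn_Icc) fun x hx ↦
      sub_le_self _ (mul_nonneg (mul_nonneg (by positivity) (hf x (Ioo_subset_Icc_self hx)))
        (rpow_nonneg (one_sub_sq_pos hx).le _))
  calc (f.eval 1 + f.eval (-1)) * 0 ^ (a : ℝ)
      = (X * f).eval 1 * (1 - 1 ^ 2) ^ (a : ℝ) -
          (X * f).eval (-1) * (1 - (-1) ^ 2) ^ (a : ℝ) := by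
        simp only [eval_mul, eval_X, neg_sq, one_pow, sub_self]
        ring
    _ ≤ gegFunctional a G := hle
    _ = loweredGegFunctional a f := by
        rw [hG, map_add, map_smul, smul_eq_mul, loweredGegFunctional_apply]

theorem loweredGegFunctional_pos {f : ℝ[X]} (hf : ∀ x ∈ Icc (-1 : ℝ) 1, 0 ≤ f.eval x)
    (hf1 : 0 < f.eval 1) : 0 < loweredGegFunctional a f := by
  rcases eq_or_ne a 0 with rfl | ha
  · refine lt_of_lt_of_le ?_ (le_loweredGegFunctional 0 hf)
    rw [NNReal.coe_zero, rpow_zero, mul_one]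
    exact add_pos_of_pos_of_nonneg hf1 (hf _ (left_mem_Icc.2 (by norm_num)))
  · have hXf : 0 ≤ loweredGegFunctional a (X ^ 2 * f) := by
      have hle := le_loweredGegFunctional a (f := X ^ 2 * f) fun x hx ↦ by
        simpa only [eval_mul, eval_pow, eval_X] using mul_nonneg (sq_nonneg x) (hf x hx)
      rwa [zero_rpow (NNReal.coe_ne_zero.2 ha), mul_zero] at hle
    have hsplit : f = X ^ 2 * f - (X ^ 2 - 1) * f := by ring
    have hIf : 0 < gegFunctional a f := gegFunctional_pos (fun h0 ↦ by simp [h0] at hf1) hf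
    have ha_pos : 0 < (a : ℝ) := NNReal.coe_pos.2 (pos_iff_ne_zero.2 ha)
    rw [hsplit, map_sub, loweredGegFunctional_sq_sub_one_mul, sub_neg_eq_add]
    exact add_pos_of_nonneg_of_pos hXf (mul_pos (mul_pos two_pos ha_pos) hIf)

theorem eval_parityLift_nonneg {f : ℝ[X]} (hf : ∀ t ∈ Icc (0 : ℝ) 1, 0 ≤ f.eval t) (e : ℕ)
    {x : ℝ} (hx : x ∈ Icc (-1 : ℝ) 1) : 0 ≤ (parityLift ℝ (e + e) f).eval x := by
  rw [eval_parityLift]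
  exact mul_nonneg (Even.pow_nonneg ⟨e, rfl⟩ x)
    (hf _ ⟨sq_nonneg x, sub_nonneg.1 (one_sub_sq_nonneg hx)⟩)

theorem isChristoffelPair_gegFunctional (a : ℝ≥0) (e : ℕ) :
    IsChristoffelPair (2 * a) (gegFunctional a ∘ₗ parityLift ℝ (e + e))
      (loweredGegFunctional a ∘ₗ parityLift ℝ (e + e)) where
  nonneg := by positivity
  pos f hf hnonneg :=
    gegFunctional_pos (parityLift_ne_zero hf) fun _ ↦ eval_parityLift_nonneg hnonneg e
  lowered_pos f hnonneg hf1 :=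
    loweredGegFunctional_pos (fun _ ↦ eval_parityLift_nonneg hnonneg e) <| by
      simpa only [eval_parityLift, one_pow, one_mul] using hf1
  lowered_X_sub_one_mul f := by
    simp only [LinearMap.comp_apply]
    rw [← loweredGegFunctional_sq_sub_one_mul, sub_mul, map_sub, parityLift_X_mul, one_mul,
      sub_mul, one_mul]

/-- The bilinear form `∫ f * g + lam * ∫ f' * g'` for the weight `(1 - x ^ 2) ^ a`. -/
noncomputable def gegSobolevForm (a : ℝ≥0) (lam : ℝ) : LinearMap.BilinForm ℝ ℝ[X] :=
  momentForm (gegFunctional a) +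
    lam • (momentForm (gegFunctional a)).compl₁₂ derivative derivative

theorem gegSobolevForm_apply (a : ℝ≥0) (lam : ℝ) (f g : ℝ[X]) :
    gegSobolevForm a lam f g =
      gegFunctional a (f * g) + lam * gegFunctional a (derivative f * derivative g) :=
  rfl

theorem gegSobolevForm_self_pos (hlam : 0 ≤ lam) {f : ℝ[X]} (hf : f ≠ 0) :
    0 < gegSobolevForm a lam f f := by
  refine add_pos_of_pos_of_nonneg (gegFunctional_mul_self_pos hf) (mul_nonneg hlam ?_)
  rcases eq_or_ne (derivative f) 0 with hf' | hf'
  · simp [hf']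
  · exact (gegFunctional_mul_self_pos hf').le

theorem gegSobolevForm_comp_neg_X (a : ℝ≥0) (lam : ℝ) (f g : ℝ[X]) :
    gegSobolevForm a lam (f.comp (-X)) g = gegSobolevForm a lam f (g.comp (-X)) := by
  have hderiv (p : ℝ[X]) : derivative (p.comp (-X)) = -(derivative p).comp (-X) := by
    rw [derivative_comp, derivative_neg, derivative_X, neg_mul, one_mul]
  have hmove (p q : ℝ[X]) :
      gegFunctional a (p.comp (-X) * q) = gegFunctional a (p * q.comp (-X)) := by
    rw [← gegFunctional_comp_neg_X, mul_comp, comp_neg_X_comp_neg_X]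
  rw [gegSobolevForm_apply, gegSobolevForm_apply, hderiv, hderiv, neg_mul, mul_neg, map_neg,
    map_neg, hmove, hmove]

theorem gegSobolevForm_parityLift (he : e ≤ 1) (q g : ℝ[X]) :
    gegSobolevForm a lam (parityLift ℝ e q) (parityLift ℝ e g) =
      foldedSobolevForm (gegFunctional a ∘ₗ parityLift ℝ (e + e))
        (loweredGegFunctional a ∘ₗ parityLift ℝ (e + e)) lam e q g := by
  set P := parityLift ℝ e q
  set G := parityLift ℝ e g
  have hibp : gegFunctional a (derivative P * derivative G) =
      loweredGegFunctional a (P * (X * derivative G)) -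
        gegFunctional a (P * derivative (derivative G)) := by
    rw [mul_left_comm, ← gegFunctional_derivative, derivative_mul, map_add, add_sub_cancel_right]
  rw [gegSobolevForm_apply, hibp, X_mul_derivative_parityLift, derivative_derivative_parityLift he]
  simp only [P, G, parityLift_mul_parityLift]
  rfl

theorem isMonicOrthogonal_foldedSobolevForm (he : e ≤ 1) {m : ℕ} {q : ℝ[X]}
    (hq : IsMonicOrthogonal (gegSobolevForm a lam) (e + 2 * m) (parityLift ℝ e q)) :
    IsMonicOrthogonal (foldedSobolevForm (gegFunctional a ∘ₗ parityLift ℝ (e + e))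
      (loweredGegFunctional a ∘ₗ parityLift ℝ (e + e)) lam e) m q := by
  obtain ⟨⟨hdeg, hmonic⟩, horth⟩ := hq
  have hqmonic := monic_of_monic_parityLift hmonic
  rw [natDegree_parityLift hqmonic.ne_zero] at hdeg
  refine ⟨⟨by omega, hqmonic⟩, fun g hg ↦ ?_⟩
  rw [← gegSobolevForm_parityLift he]
  exact horth _ (degree_parityLift_lt hg)

theorem exists_eq_parityLift_prod_X_sub_C (hlam : 0 ≤ lam) {Q : ℝ[X]}
    (hQ : IsMonicOrthogonal (gegSobolevForm a lam) n Q) :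
    ∃ s : Multiset ℝ, (∀ t ∈ s, t ∈ Icc (0 : ℝ) 1) ∧
      Q = parityLift ℝ (n % 2) (s.map fun t ↦ X - C t).prod := by
  have hparity := hQ.comp_neg_X (fun f hf ↦ (gegSobolevForm_self_pos hlam hf).ne')
    (gegSobolevForm_comp_neg_X a lam)
  obtain ⟨q, rfl⟩ := exists_parityLift_eq hparity
  have he : n % 2 ≤ 1 := Nat.le_of_lt_succ (Nat.mod_lt n two_pos)
  rw [← Nat.mod_add_div n 2, Nat.add_mul_mod_self_left, Nat.mod_mod] at hQ
  have hpair := isChristoffelPair_gegFunctional a (n % 2)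
  obtain ⟨s, hs, rfl⟩ := hpair.exists_eq_prod_X_sub_C_of_isMonicOrthogonal hlam
    (fun f hf ↦ by
      rw [← gegSobolevForm_parityLift he]
      exact gegSobolevForm_self_pos hlam (parityLift_ne_zero hf))
    (isMonicOrthogonal_foldedSobolevForm he hQ)
  exact ⟨s, hs, rfl⟩

theorem exists_sq_eq_of_aeval_parityLift_eq_zero {s : Multiset ℝ}
    (hs : ∀ t ∈ s, t ∈ Icc (0 : ℝ) 1) {z : ℂ}
    (hz : aeval z (parityLift ℝ e (s.map fun t ↦ X - C t).prod) = 0) :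
    ∃ t ∈ Icc (0 : ℝ) 1, z ^ 2 = t := by
  rw [parityLift_apply, map_mul, map_pow, aeval_X, expand_aeval, map_multiset_prod, mul_eq_zero,
    Multiset.prod_eq_zero_iff, Multiset.map_map, Multiset.mem_map] at hz
  rcases hz with hz | ⟨t, ht, hzt⟩
  · exact ⟨0, left_mem_Icc.2 zero_le_one, by simp [eq_zero_of_pow_eq_zero hz]⟩
  · exact ⟨t, hs t ht, sub_eq_zero.1 (by simpa using hzt)⟩

theorem im_eq_zero_and_re_mem_Icc_of_sq_eq {t : ℝ} (ht : t ∈ Icc (0 : ℝ) 1) {z : ℂ}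
    (hz : z ^ 2 = t) : z.im = 0 ∧ z.re ∈ Icc (-1 : ℝ) 1 := by
  have hsqrt : √t ∈ Icc (0 : ℝ) 1 := ⟨sqrt_nonneg t, sqrt_le_one.2 ht.2⟩
  have hzsqrt : z ^ 2 = (√t : ℂ) ^ 2 := by rw [hz, ← Complex.ofReal_pow, sq_sqrt ht.1]
  rcases sq_eq_sq_iff_eq_or_eq_neg.1 hzsqrt with rfl | rfl
  · exact ⟨Complex.ofReal_im _, (by linarith [hsqrt.1] : -1 ≤ √t), hsqrt.2⟩
  · rw [← Complex.ofReal_neg]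
    exact ⟨Complex.ofReal_im _, neg_le_neg hsqrt.2, (by linarith [hsqrt.1] : -√t ≤ 1)⟩

end Gegenbauer

/-- For `α ≥ 1/2` all zeros of the Gegenbauer–Sobolev polynomial lie in `[-1,1]`. -/
theorem gegSobolev_zeros_in_Icc (α lam : ℝ) (hα : 1/2 ≤ α) (hlam : 0 ≤ lam)
    (n : ℕ) (hn : 1 ≤ n)
    (Q : Polynomial ℝ) (hQ : IsMonicGegSobolev α lam n Q) :
    ∀ z : ℂ, Polynomial.aeval z Q = 0 →
      z.im = 0 ∧ -1 ≤ z.re ∧ z.re ≤ 1 := by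
  intro z hz
  lift α - 1 / 2 to ℝ≥0 using sub_nonneg.2 hα with a ha
  obtain ⟨hmonic, hdeg, horth⟩ := hQ
  have hQorth : IsMonicOrthogonal (gegSobolevForm a lam) n Q := by
    refine ⟨⟨hdeg, hmonic⟩, fun p hp ↦ ?_⟩
    rw [gegSobolevForm_apply, ← gegInner_eq_gegFunctional ha, ← gegInner_eq_gegFunctional ha]
    exact horth p hp
  obtain ⟨s, hs, rfl⟩ := exists_eq_parityLift_prod_X_sub_C hlam hQorth
  obtain ⟨t, ht, hzt⟩ := exists_sq_eq_of_aeval_parityLift_eq_zero hs hz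
  exact im_eq_zero_and_re_mem_Icc_of_sq_eq ht hzt
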